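/- For every fixed integer q ≥ 2 and every fixed integer R ≥ 2, limsup_{n→∞} μ_D^q(n,R) ≤ e·(R·ln R + √(2R·ln R) + 1) · limsup_{n→∞} μ_D^q(n,1). -/

import Mathlib

/-- `KD q n R` is the minimum cardinality of an `R`-deletion-covering code of
length-`n` words over the alphabet `Fin q`. -/
noncomputable def KD (q n R : ℕ) : ℕ :=
  sInf {k : ℕ | ∃ C : Finset (List (Fin q)),
    (∀ c ∈ C, c.length = n) ∧
    (∀ y : List (Fin q), y.length = n - R → ∃ c ∈ C, y.Sublist c) ∧
    C.card = k}

/-- The density `μ_D^q(n,R) = K_D^q(n,R)·n^R·(q-1)^R/(q^n·R!)` of optimal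
`R`-deletion-covering codes. -/
noncomputable def muD (q n R : ℕ) : ℝ :=
  (KD q n R : ℝ) * (n : ℝ) ^ R * ((q : ℝ) - 1) ^ R / ((q : ℝ) ^ n * (R.factorial : ℝ))

/-!
Split a word of length `n - R` into a prefix and a suffix. Every word of length `m - r` over `Fin q`
has at least `m.choose r * (q - 1) ^ r` supersequences of length `m`, so a greedy choice of about
`x * q ^ m / (m.choose r * (q - 1) ^ r)` words of length `m` covers all but a fraction `exp (-x)` of
the prefixes of length `m - r`. Appending an optimal 1-deletion code to the chosen words handles
the covered prefixes, and appending an optimal `R`-deletion code to the uncovered prefixes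
themselves handles the rest. With `R = r + 1`, `k = n / R` and `m = n - k`, this gives
`muD q n R ≤ c n * muD q k 1 + exp (-x) * R ^ R * muD q (k + r) R`,
where `c n → x * (1 + 1 / r) ^ r ≤ exp 1 * x`. Varshamov-Tenengolts codes bound `muD q k 1`, hence
once `exp (-x) * R ^ R < 1` the recursion passes to the limsup; the choice
`x = R log R + √(2 R log R)` finishes the proof.
-/

open Filter Topology
open scoped Finset List

section Greedy

variable {α β : Type*} {A : Finset α} {rel : α → β → Prop} [DecidableRel rel] {p : ℝ}

lemma exists_mul_card_le_card_filter {U : Finset β} (hA : A.Nonempty)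
    (h : ∀ b ∈ U, p * #A ≤ #{a ∈ A | rel a b}) : ∃ a ∈ A, p * #U ≤ #{b ∈ U | rel a b} := by
  apply Finset.exists_le_of_sum_le hA
  calc ∑ _a ∈ A, p * #U = ∑ _b ∈ U, p * #A := by
        simp only [Finset.sum_const, nsmul_eq_mul]; ring
    _ ≤ ∑ b ∈ U, (#{a ∈ A | rel a b} : ℝ) := Finset.sum_le_sum h
    _ = ∑ a ∈ A, (#{b ∈ U | rel a b} : ℝ) :=
        mod_cast (Finset.sum_card_bipartiteAbove_eq_sum_card_bipartiteBelow rel).symm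

/- Choose greedily: averaging gives an element covering a proportion `p` of what is still
uncovered, so each step shrinks the uncovered part by the factor `1 - p ≤ exp (-p)`. -/
lemma exists_subset_card_uncovered_le {P : Finset β} (hA : A.Nonempty)
    (h : ∀ b ∈ P, p * #A ≤ #{a ∈ A | rel a b}) (M : ℕ) :
    ∃ S ⊆ A, #S ≤ M ∧ (#{b ∈ P | ∀ a ∈ S, ¬ rel a b} : ℝ) ≤ Real.exp (-(p * M)) * #P := by
  classical
  induction M with
  | zero => exact ⟨∅, by simp⟩
  | succ M ih =>
    obtain ⟨S, hSA, hSM, hS⟩ := ih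
    set U := {b ∈ P | ∀ a ∈ S, ¬ rel a b}
    obtain ⟨a, ha, hcov⟩ := exists_mul_card_le_card_filter (U := U) hA
      fun b hb ↦ h b (Finset.mem_of_mem_filter b hb)
    refine ⟨insert a S, Finset.insert_subset ha hSA, by grind [Finset.card_insert_le], ?_⟩
    have huncov : {b ∈ P | ∀ a' ∈ insert a S, ¬ rel a' b} = {b ∈ U | ¬ rel a b} := by grind
    have hsplit : (#{b ∈ U | rel a b} + #{b ∈ U | ¬ rel a b} : ℝ) = #U :=
      mod_cast Finset.card_filter_add_card_filter_not (s := U) (rel a)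
    rw [huncov]
    calc (#{b ∈ U | ¬ rel a b} : ℝ) ≤ (1 - p) * #U := by linarith
      _ ≤ Real.exp (-p) * (Real.exp (-(p * M)) * #P) := by
        gcongr
        exact Real.one_sub_le_exp_neg p
      _ = Real.exp (-(p * (M + 1 : ℕ))) * #P := by
        rw [← mul_assoc, ← Real.exp_add]; push_cast; ring_nf

lemma exists_subset_card_le_div_add_one {P : Finset β} (hA : A.Nonempty) (hp : 0 < p)
    (h : ∀ b ∈ P, p * #A ≤ #{a ∈ A | rel a b}) {x : ℝ} (hx : 0 ≤ x) :
    ∃ S ⊆ A, #S ≤ x / p + 1 ∧ (#{b ∈ P | ∀ a ∈ S, ¬ rel a b} : ℝ) ≤ Real.exp (-x) * #P := by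
  obtain ⟨S, hSA, hSM, hS⟩ := exists_subset_card_uncovered_le hA h ⌈x / p⌉₊
  refine ⟨S, hSA, ?_, hS.trans ?_⟩
  · calc (#S : ℝ) ≤ ⌈x / p⌉₊ := mod_cast hSM
      _ ≤ x / p + 1 := (Nat.ceil_lt_add_one (by positivity)).le
  · gcongr
    exact (div_le_iff₀' hp).1 (Nat.le_ceil _)

end Greedy

section Words

/-- The finite set of all words of length `n` over the alphabet `α`. Words are lists, as in the
definition of `KD`, rather than functions on `Fin n`. -/
def wordsOfLength (α : Type*) [Fintype α] (n : ℕ) : Finset (List α) :=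
  (Finset.univ : Finset (List.Vector α n)).map ⟨_, List.Vector.toList_injective⟩

variable {α : Type*} [Fintype α]

@[simp]
lemma mem_wordsOfLength {n : ℕ} {w : List α} : w ∈ wordsOfLength α n ↔ w.length = n :=
  Finset.mem_map.trans ⟨fun ⟨v, _, hv⟩ ↦ hv ▸ v.2, fun h ↦ ⟨⟨w, h⟩, Finset.mem_univ _, rfl⟩⟩

@[simp]
lemma card_wordsOfLength (n : ℕ) : #(wordsOfLength α n) = Fintype.card α ^ n := by
  rw [wordsOfLength, Finset.card_map, Finset.card_univ, card_vector]

variable [DecidableEq α]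

-- A supersequence of `a :: y` either starts with `a`, matched greedily, or skips its first letter.
lemma card_supersequences_cons_ge (a : α) (y : List α) (m : ℕ) :
    #{c ∈ wordsOfLength α m | y <+ c} +
        (Fintype.card α - 1) * #{c ∈ wordsOfLength α m | a :: y <+ c} ≤
      #{c ∈ wordsOfLength α (m + 1) | a :: y <+ c} := by
  set startMatched := Finset.image₂ List.cons {a} {c ∈ wordsOfLength α m | y <+ c}
  set startSkipped :=
    Finset.image₂ List.cons (Finset.univ.erase a) {c ∈ wordsOfLength α m | a :: y <+ c}
  have hinj : Function.Injective2 (List.cons : α → List α → List α) := fun _ _ _ _ ↦ List.cons.inj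
  have hdisj : Disjoint startMatched startSkipped := by
    rw [Finset.disjoint_left]
    grind [Finset.mem_image₂]
  have hsub : startMatched ∪ startSkipped ⊆ {c ∈ wordsOfLength α (m + 1) | a :: y <+ c} := by
    intro c hc
    rcases Finset.mem_union.1 hc with hc | hc <;>
      obtain ⟨b, hb, d, hd, rfl⟩ := Finset.mem_image₂.1 hc <;>
      simp_all [List.Sublist.cons]
  calc _ = #startMatched + #startSkipped := by
        rw [Finset.card_image₂ hinj, Finset.card_image₂ hinj, Finset.card_singleton, one_mul,
          Finset.card_erase_of_mem (Finset.mem_univ a), Finset.card_univ]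
    _ = #(startMatched ∪ startSkipped) := (Finset.card_union_of_disjoint hdisj).symm
    _ ≤ _ := Finset.card_le_card hsub

lemma choose_mul_pow_le_card_supersequences {m r : ℕ} {y : List α} (h : y.length + r = m) :
    m.choose r * (Fintype.card α - 1) ^ r ≤ #{c ∈ wordsOfLength α m | y <+ c} := by
  induction m generalizing r y with
  | zero =>
    obtain ⟨rfl, rfl⟩ : y = [] ∧ r = 0 := by simpa using h
    simp
  | succ m ih =>
    match y, r with
    | [], r =>
      obtain rfl : r = m + 1 := by simpa using h
      simpa using Nat.pow_le_pow_left (Nat.sub_le _ 1) (m + 1)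
    | a :: y, 0 =>
      have hy : y.length + 0 = m := by simpa using h
      have := ih hy
      have := card_supersequences_cons_ge a y m
      simp only [Nat.choose_zero_right, pow_zero, mul_one] at *
      omega
    | a :: y, r + 1 =>
      have hy : y.length + (r + 1) = m := by grind
      have hay : (a :: y).length + r = m := by grind
      calc (m + 1).choose (r + 1) * (Fintype.card α - 1) ^ (r + 1)
          = m.choose (r + 1) * (Fintype.card α - 1) ^ (r + 1) +
              (Fintype.card α - 1) * (m.choose r * (Fintype.card α - 1) ^ r) := by
            rw [Nat.choose_succ_succ']; ring
        _ ≤ _ := Nat.add_le_add (ih hy) (Nat.mul_le_mul_left _ (ih hay))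
        _ ≤ _ := card_supersequences_cons_ge a y m

end Words

section VarshamovTenengolts

variable {α : Type*} {p : α → Bool}

/-- The Varshamov–Tenengolts checksum `∑ i, i * 1[p (w i)]` of a word `w`, with positions counted
from `1`; in the classical binary setting `p` singles out the letter `1`. It is computed by summing,
over all nonempty suffixes, the number of letters satisfying `p`. -/
def vtChecksum (p : α → Bool) : List α → ℕ
  | [] => 0
  | a :: w => vtChecksum p w + (a :: w).countP p

lemma exists_supersequence_vtChecksum_eq_add {b : α} (hb : ¬ p b) (y : List α) {j : ℕ}
    (hj : j ≤ y.countP p) :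
    ∃ x : List α, x.length = y.length + 1 ∧ y <+ x ∧ x.countP p = y.countP p ∧
      vtChecksum p x = vtChecksum p y + j := by
  induction y generalizing j with
  | nil => exact ⟨[b], by simp_all [vtChecksum]⟩
  | cons a y ih =>
    obtain rfl | hlt := hj.eq_or_lt
    · exact ⟨b :: a :: y, by simp, List.sublist_cons_self _ _, by simp [hb], by
        rw [vtChecksum, List.countP_cons_of_neg hb]⟩
    · obtain ⟨x, hlen, hsub, hcount, hsum⟩ := ih (j := j) (by grind)
      exact ⟨a :: x, by simp [hlen], hsub.cons_cons a, by simp [List.countP_cons, hcount], by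
        simp only [vtChecksum, List.countP_cons, hcount, hsum]; ring⟩

lemma exists_supersequence_vtChecksum_eq_add_countP_add {b : α} (hb : p b) (y : List α) {j : ℕ}
    (hj : j ≤ y.countP (fun a ↦ ¬ p a)) :
    ∃ x : List α, x.length = y.length + 1 ∧ y <+ x ∧ x.countP p = y.countP p + 1 ∧
      vtChecksum p x = vtChecksum p y + (y.countP p + 1 + j) := by
  induction y generalizing j with
  | nil => exact ⟨[b], by simp_all [vtChecksum]⟩
  | cons a y ih =>
    obtain rfl | hpos := j.eq_zero_or_pos
    · exact ⟨b :: a :: y, by simp, List.sublist_cons_self _ _, by simp [hb], by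
        rw [vtChecksum, List.countP_cons_of_pos hb, add_zero]⟩
    · by_cases ha : p a
      · obtain ⟨x, hlen, hsub, hcount, hsum⟩ := ih (j := j) (by simpa [ha] using hj)
        exact ⟨a :: x, by simp [hlen], hsub.cons_cons a, by simp [ha, hcount], by
          simp only [vtChecksum, List.countP_cons_of_pos ha, hcount, hsum]; ring⟩
      · obtain ⟨x, hlen, hsub, hcount, hsum⟩ := ih (j := j - 1) (by simp_all)
        exact ⟨a :: x, by simp [hlen], hsub.cons_cons a, by simp [ha, hcount], by
          simp only [vtChecksum, List.countP_cons_of_neg ha, hcount, hsum]; omega⟩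

/- Inserting a letter violating `p` into `y` adds the number of letters satisfying `p` to its
right, which takes each value in `[0, w]` with `w = y.countP p`; inserting a letter satisfying `p`
adds `w + 1` plus the number of letters violating `p` to its left. -/
lemma exists_supersequence_vtChecksum_eq_add_of_le_length {b₀ b₁ : α} (h₀ : ¬ p b₀) (h₁ : p b₁)
    (y : List α) {j : ℕ} (hj : j ≤ y.length + 1) :
    ∃ x : List α, x.length = y.length + 1 ∧ y <+ x ∧ vtChecksum p x = vtChecksum p y + j := by
  by_cases hjw : j ≤ y.countP p
  · obtain ⟨x, hlen, hsub, -, hsum⟩ := exists_supersequence_vtChecksum_eq_add h₀ y hjw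
    exact ⟨x, hlen, hsub, hsum⟩
  · have hlen := y.length_eq_countP_add_countP p
    obtain ⟨i, rfl⟩ := Nat.exists_eq_add_of_lt (not_le.1 hjw)
    obtain ⟨x, hlen, hsub, -, hsum⟩ :=
      exists_supersequence_vtChecksum_eq_add_countP_add h₁ y (j := i) (by omega)
    exact ⟨x, hlen, hsub, by omega⟩

end VarshamovTenengolts

section DeletionCovering

variable {α : Type*}

/-- `C` is an `R`-deletion-covering code of length `n`. -/
structure IsDeletionCovering (n R : ℕ) (C : Finset (List α)) : Prop where
  length_eq : ∀ c ∈ C, c.length = n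
  exists_supersequence : ∀ y : List α, y.length = n - R → ∃ c ∈ C, y <+ c

lemma isDeletionCovering_wordsOfLength (α : Type*) [Fintype α] [Nonempty α] (n R : ℕ) :
    IsDeletionCovering n R (wordsOfLength α n) where
  length_eq := by simp
  exists_supersequence y hy := by
    let c := y ++ List.replicate (n - y.length) (Classical.arbitrary α)
    exact ⟨c, by simp [c]; omega, List.sublist_append_left _ _⟩

lemma IsDeletionCovering.union_image₂_append [DecidableEq α] {m k r s : ℕ}
    {S U C D : Finset (List α)} (hr : r ≤ m) (hs : s ≤ k) (hS : ∀ a ∈ S, a.length = m)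
    (hU : ∀ u ∈ U, u.length = m - r)
    (hSU : ∀ y : List α, y.length = m - r → y ∈ U ∨ ∃ a ∈ S, y <+ a)
    (hC : IsDeletionCovering k s C) (hD : IsDeletionCovering (k + r) (r + s) D) :
    IsDeletionCovering (m + k) (r + s)
      (Finset.image₂ (· ++ ·) S C ∪ Finset.image₂ (· ++ ·) U D) where
  length_eq c hc := by
    rcases Finset.mem_union.1 hc with hc | hc <;>
      obtain ⟨a, ha, d, hd, rfl⟩ := Finset.mem_image₂.1 hc
    · rw [List.length_append, hS a ha, hC.length_eq d hd]
    · rw [List.length_append, hU a ha, hD.length_eq d hd]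
      omega
  exists_supersequence y hy := by
    obtain ⟨z, w, rfl, hz⟩ : ∃ z w, y = z ++ w ∧ z.length = m - r :=
      ⟨_, _, (y.take_append_drop (m - r)).symm, by simp; omega⟩
    rw [List.length_append] at hy
    rcases hSU z hz with hzU | ⟨a, ha, hza⟩
    · obtain ⟨d, hd, hwd⟩ := hD.exists_supersequence w (by omega)
      exact ⟨z ++ d, Finset.mem_union_right _ (Finset.mem_image₂_of_mem hzU hd), hwd.append_left z⟩
    · obtain ⟨c, hc, hwc⟩ := hC.exists_supersequence w (by omega)
      exact ⟨a ++ c, Finset.mem_union_left _ (Finset.mem_image₂_of_mem ha hc), hza.append hwc⟩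

lemma isDeletionCovering_vtCode [Fintype α] {p : α → Bool} {b₀ b₁ : α} (h₀ : ¬ p b₀) (h₁ : p b₁)
    {n : ℕ} (hn : 1 ≤ n) (c : ZMod (n + 1)) :
    IsDeletionCovering n 1 {w ∈ wordsOfLength α n | (vtChecksum p w : ZMod (n + 1)) = c} where
  length_eq w hw := by simp_all
  exists_supersequence y hy := by
    set j := (c - (vtChecksum p y : ZMod (n + 1))).val with hj
    have hj_lt : j < n + 1 := ZMod.val_lt _
    obtain ⟨x, hlen, hsub, hsum⟩ :=
      exists_supersequence_vtChecksum_eq_add_of_le_length h₀ h₁ y (j := j) (by omega)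
    refine ⟨x, ?_, hsub⟩
    simp only [Finset.mem_filter, mem_wordsOfLength, hsum, Nat.cast_add, hj,
      ZMod.natCast_zmod_val, add_sub_cancel, and_true]
    omega

variable {q : ℕ}

lemma KD_le_card {n R : ℕ} {C : Finset (List (Fin q))} (hC : IsDeletionCovering n R C) :
    KD q n R ≤ #C :=
  Nat.sInf_le ⟨C, hC.1, hC.2, rfl⟩

lemma exists_isDeletionCovering_card_eq_KD [NeZero q] (n R : ℕ) :
    ∃ C : Finset (List (Fin q)), IsDeletionCovering n R C ∧ #C = KD q n R := by
  have hwords := isDeletionCovering_wordsOfLength (Fin q) n R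
  have hne : {N : ℕ | ∃ C : Finset (List (Fin q)), (∀ c ∈ C, c.length = n) ∧
      (∀ y : List (Fin q), y.length = n - R → ∃ c ∈ C, y <+ c) ∧ #C = N}.Nonempty :=
    ⟨_, _, hwords.1, hwords.2, rfl⟩
  obtain ⟨C, hlen, hcov, hcard⟩ := Nat.sInf_mem hne
  exact ⟨C, ⟨hlen, hcov⟩, hcard⟩

lemma KD_one_le (hq : 2 ≤ q) {n : ℕ} (hn : 1 ≤ n) : (KD q n 1 : ℝ) ≤ q ^ n / (n + 1) := by
  let p : Fin q → Bool := fun a ↦ a.val = 1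
  have hpigeonhole : (#(wordsOfLength (Fin q) n) : ℝ) ≤
      #(Finset.univ : Finset (ZMod (n + 1))) • ((q : ℝ) ^ n / (n + 1)) := by
    simp [ZMod.card, mul_div_cancel₀ _ (Nat.cast_add_one_ne_zero (R := ℝ) n)]
  obtain ⟨c, -, hc⟩ := Finset.exists_card_fiber_le_of_card_le_nsmul
    (f := fun w ↦ (vtChecksum p w : ZMod (n + 1))) Finset.univ_nonempty hpigeonhole
  have hcode := isDeletionCovering_vtCode (p := p) (b₀ := ⟨0, by omega⟩) (b₁ := ⟨1, hq⟩)
    (by simp [p]) (by simp [p]) hn c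
  exact (Nat.cast_le.2 (KD_le_card hcode)).trans hc

lemma KD_add_le [NeZero q] {m k r s : ℕ} {S U : Finset (List (Fin q))} (hr : r ≤ m) (hs : s ≤ k)
    (hS : ∀ a ∈ S, a.length = m) (hU : ∀ u ∈ U, u.length = m - r)
    (hSU : ∀ y : List (Fin q), y.length = m - r → y ∈ U ∨ ∃ a ∈ S, y <+ a) :
    KD q (m + k) (r + s) ≤ #S * KD q k s + #U * KD q (k + r) (r + s) := by
  obtain ⟨C, hC, hCcard⟩ := exists_isDeletionCovering_card_eq_KD (q := q) k s
  obtain ⟨D, hD, hDcard⟩ := exists_isDeletionCovering_card_eq_KD (q := q) (k + r) (r + s)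
  rw [← hCcard, ← hDcard]
  calc KD q (m + k) (r + s)
      ≤ #(Finset.image₂ (· ++ ·) S C ∪ Finset.image₂ (· ++ ·) U D) :=
        KD_le_card (hC.union_image₂_append hr hs hS hU hSU hD)
    _ ≤ #(Finset.image₂ (· ++ ·) S C) + #(Finset.image₂ (· ++ ·) U D) := Finset.card_union_le _ _
    _ ≤ #S * #C + #U * #D :=
        Nat.add_le_add (Finset.card_image₂_le _ _ _) (Finset.card_image₂_le _ _ _)

/-- A lower bound for the proportion of words of length `m` over `Fin q` that are supersequences of
a given word of length `m - r`. -/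
noncomputable def supersequenceDensity (q m r : ℕ) : ℝ :=
  m.choose r * ((q : ℝ) - 1) ^ r / (q : ℝ) ^ m

lemma supersequenceDensity_pos (hq : 2 ≤ q) {m r : ℕ} (hr : r ≤ m) :
    0 < supersequenceDensity q m r := by
  have hq' : (0 : ℝ) < q - 1 := by
    rw [sub_pos]; exact_mod_cast hq
  have := Nat.choose_pos hr
  unfold supersequenceDensity
  positivity

lemma supersequenceDensity_mul_card_le [NeZero q] {m r : ℕ} {y : List (Fin q)}
    (hy : y.length + r = m) :
    supersequenceDensity q m r * #(wordsOfLength (Fin q) m) ≤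
      #{c ∈ wordsOfLength (Fin q) m | y <+ c} := by
  have hq : (0 : ℝ) < q := mod_cast NeZero.pos q
  have hcount := choose_mul_pow_le_card_supersequences hy
  calc supersequenceDensity q m r * #(wordsOfLength (Fin q) m)
      = (m.choose r * (Fintype.card (Fin q) - 1) ^ r : ℕ) := by
        rw [supersequenceDensity, card_wordsOfLength, Fintype.card_fin]
        push_cast [Nat.cast_sub NeZero.one_le]
        field_simp
    _ ≤ _ := mod_cast hcount

lemma KD_add_le_exp (hq : 2 ≤ q) {m k r s : ℕ} (hr : r ≤ m) (hs : s ≤ k) {x : ℝ} (hx : 0 ≤ x) :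
    (KD q (m + k) (r + s) : ℝ) ≤ (x / supersequenceDensity q m r + 1) * KD q k s +
      Real.exp (-x) * (q : ℝ) ^ (m - r) * KD q (k + r) (r + s) := by
  have : NeZero q := ⟨by omega⟩
  obtain ⟨S, hSwords, hScard, hUcard⟩ := exists_subset_card_le_div_add_one
    (A := wordsOfLength (Fin q) m) (P := wordsOfLength (Fin q) (m - r)) (rel := fun a b ↦ b <+ a)
    (p := supersequenceDensity q m r)
    (Finset.card_pos.1 (by simp [NeZero.pos q])) (supersequenceDensity_pos hq hr)
    (fun b hb ↦ supersequenceDensity_mul_card_le (by rw [mem_wordsOfLength.1 hb]; omega)) hx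
  set U := {b ∈ wordsOfLength (Fin q) (m - r) | ∀ a ∈ S, ¬ b <+ a}
  rw [card_wordsOfLength, Fintype.card_fin, Nat.cast_pow] at hUcard
  have hKD : KD q (m + k) (r + s) ≤ #S * KD q k s + #U * KD q (k + r) (r + s) := by
    refine KD_add_le hr hs (fun a ha ↦ mem_wordsOfLength.1 (hSwords ha))
      (by grind [mem_wordsOfLength]) fun y hy ↦ ?_
    simp only [U, Finset.mem_filter, mem_wordsOfLength, hy, true_and]
    by_contra! h
    grind
  calc (KD q (m + k) (r + s) : ℝ)
      ≤ #S * KD q k s + #U * KD q (k + r) (r + s) := mod_cast hKD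
    _ ≤ _ := by gcongr

end DeletionCovering

section LimsupRecursion

variable {a b : ℕ → ℝ} {f : ℕ → ℕ} {c : ℝ}

lemma isBoundedUnder_le_of_le_add_mul_comp (hc₀ : 0 ≤ c) (hc₁ : c < 1)
    (hf : ∀ᶠ n in atTop, f n < n) (hb : IsBoundedUnder (· ≤ ·) atTop b)
    (hab : ∀ᶠ n in atTop, a n ≤ b n + c * a (f n)) : IsBoundedUnder (· ≤ ·) atTop a := by
  obtain ⟨β, hβ⟩ := hb
  rw [eventually_map] at hβ
  obtain ⟨N, hN⟩ := eventually_atTop.1 (hf.and (hβ.and hab))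
  obtain ⟨M, hM⟩ := ((Set.finite_Iio N).image a).bddAbove
  set T := max M (β / (1 - c))
  have hT : β + c * T ≤ T := by
    have : β / (1 - c) ≤ T := le_max_right _ _
    rw [div_le_iff₀ (sub_pos.2 hc₁)] at this
    linarith
  refine isBoundedUnder_of ⟨T, fun n ↦ ?_⟩
  induction n using Nat.strong_induction_on with
  | _ n ih =>
    rcases lt_or_ge n N with hn | hn
    · exact (hM (Set.mem_image_of_mem a hn)).trans (le_max_left _ _)
    · obtain ⟨hfn, hbn, han⟩ := hN n hn
      calc a n ≤ b n + c * a (f n) := han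
        _ ≤ β + c * T := by gcongr; exact ih _ hfn
        _ ≤ T := hT

lemma limsup_le_limsup_div_one_sub (hc₀ : 0 ≤ c) (hc₁ : c < 1) (hf : Tendsto f atTop atTop)
    (hflt : ∀ᶠ n in atTop, f n < n) (ha : IsBoundedUnder (· ≥ ·) atTop a)
    (hb : IsBoundedUnder (· ≤ ·) atTop b) (hab : ∀ᶠ n in atTop, a n ≤ b n + c * a (f n)) :
    limsup a atTop ≤ limsup b atTop / (1 - c) := by
  have ha' := isBoundedUnder_le_of_le_add_mul_comp hc₀ hc₁ hflt hb hab
  have hfixed : limsup a atTop ≤ limsup b atTop + c * limsup a atTop := by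
    refine le_of_forall_pos_le_add fun ε hε ↦ limsup_le_of_le ha.isCoboundedUnder_le ?_
    have hbε := eventually_lt_of_limsup_lt (lt_add_of_pos_right _ (half_pos hε)) hb
    have haε := hf.eventually (eventually_lt_of_limsup_lt (lt_add_of_pos_right _ (half_pos hε)) ha')
    filter_upwards [hab, hbε, haε] with n han hbn hafn
    calc a n ≤ b n + c * a (f n) := han
      _ ≤ (limsup b atTop + ε / 2) + c * (limsup a atTop + ε / 2) := by gcongr
      _ ≤ limsup b atTop + c * limsup a atTop + ε := by nlinarith
  rw [le_div_iff₀ (sub_pos.2 hc₁)]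
  linarith

end LimsupRecursion

section Density

variable {q : ℕ}

/-- The factor `n ^ R (q - 1) ^ R / (q ^ n R!)` that normalises `KD q n R` to the density
`muD q n R`. -/
noncomputable def densityScale (q n R : ℕ) : ℝ :=
  (n : ℝ) ^ R * ((q : ℝ) - 1) ^ R / ((q : ℝ) ^ n * R.factorial)

lemma muD_eq_KD_mul_densityScale (q n R : ℕ) : muD q n R = KD q n R * densityScale q n R := by
  unfold muD densityScale
  ring

lemma densityScale_nonneg (hq : 1 ≤ q) (n R : ℕ) : 0 ≤ densityScale q n R := by
  have : (0 : ℝ) ≤ q - 1 := sub_nonneg.2 (mod_cast hq)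
  unfold densityScale
  positivity

lemma muD_nonneg (hq : 1 ≤ q) (n R : ℕ) : 0 ≤ muD q n R := by
  rw [muD_eq_KD_mul_densityScale]
  exact mul_nonneg (Nat.cast_nonneg _) (densityScale_nonneg hq n R)

lemma muD_one_le (hq : 2 ≤ q) {n : ℕ} (hn : 1 ≤ n) : muD q n 1 ≤ q - 1 := by
  have hq' : (0 : ℝ) ≤ q - 1 := sub_nonneg.2 (mod_cast (by omega))
  calc muD q n 1 = KD q n 1 * densityScale q n 1 := muD_eq_KD_mul_densityScale q n 1
    _ ≤ q ^ n / (n + 1) * densityScale q n 1 :=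
        mul_le_mul_of_nonneg_right (KD_one_le hq hn) (densityScale_nonneg (by omega) n 1)
    _ = n / (n + 1) * (q - 1) := by
        simp only [densityScale, pow_one, Nat.factorial_one, Nat.cast_one, mul_one]
        field_simp
    _ ≤ 1 * (q - 1) := by
        gcongr
        exact div_le_one_of_le₀ (by linarith) (by positivity)
    _ = q - 1 := one_mul _

lemma isBoundedUnder_le_muD_one (hq : 2 ≤ q) :
    IsBoundedUnder (· ≤ ·) atTop fun n ↦ muD q n 1 :=
  isBoundedUnder_of_eventually_le ((eventually_ge_atTop 1).mono fun _ ↦ muD_one_le hq)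

/-- The coefficient of `muD q k 1` in the recursion for `muD q (m + k) (r + 1)`: the bound
`x / supersequenceDensity q m r + 1` on the number of prefixes, converted to densities. -/
noncomputable def prefixCost (q r : ℕ) (x : ℝ) (m k : ℕ) : ℝ :=
  (x / supersequenceDensity q m r + 1) * (densityScale q (m + k) (r + 1) / densityScale q k 1)

lemma prefixCost_nonneg (hq : 1 ≤ q) (r : ℕ) {x : ℝ} (hx : 0 ≤ x) (m k : ℕ) :
    0 ≤ prefixCost q r x m k := by
  have : (0 : ℝ) ≤ q - 1 := sub_nonneg.2 (mod_cast hq)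
  unfold prefixCost supersequenceDensity densityScale
  positivity

lemma prefixCost_eq (hq : 2 ≤ q) (r : ℕ) (x : ℝ) {m k : ℕ} (hm : m ≠ 0) (hk : k ≠ 0) :
    prefixCost q r x m k = ((m + k : ℕ) / k : ℝ) * ((m + k : ℕ) / m : ℝ) ^ r *
      (x / (r + 1) * ((m : ℝ) ^ r / r.factorial / m.choose r) +
        ((q : ℝ) - 1) ^ r / (r + 1).factorial * ((m : ℝ) ^ r / (q : ℝ) ^ m)) := by
  have hq₁ : (q : ℝ) - 1 ≠ 0 := sub_ne_zero.2 (mod_cast (by omega))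
  simp only [prefixCost, supersequenceDensity, densityScale, pow_add, pow_one, Nat.factorial_one,
    Nat.cast_one, div_pow, Nat.factorial_succ r, Nat.cast_mul, Nat.cast_add]
  field_simp

lemma tendsto_prefixCost {ι : Type*} {l : Filter ι} (hq : 2 ≤ q) (r : ℕ) (x : ℝ) {m k : ι → ℕ}
    {u v : ℝ} (hm : Tendsto m l atTop) (hk : Tendsto k l atTop)
    (hu : Tendsto (fun i ↦ ((m i + k i : ℕ) / m i : ℝ)) l (𝓝 u))
    (hv : Tendsto (fun i ↦ ((m i + k i : ℕ) / k i : ℝ)) l (𝓝 v)) :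
    Tendsto (fun i ↦ prefixCost q r x (m i) (k i)) l (𝓝 (v * u ^ r * (x / (r + 1)))) := by
  have hchoose : Tendsto (fun n : ℕ ↦ (n : ℝ) ^ r / r.factorial / n.choose r) atTop (𝓝 1) := by
    refine (Asymptotics.isEquivalent_iff_tendsto_one ?_).1 (isEquivalent_choose r).symm
    filter_upwards [eventually_ge_atTop r] with n hn
    exact mod_cast (Nat.choose_pos hn).ne'
  have hexp : Tendsto (fun n : ℕ ↦ (n : ℝ) ^ r / (q : ℝ) ^ n) atTop (𝓝 0) :=
    tendsto_pow_const_div_const_pow_of_one_lt r (mod_cast hq)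
  have hlim := (hv.mul (hu.pow r)).mul (((hchoose.comp hm).const_mul (x / (r + 1))).add
    ((hexp.comp hm).const_mul (((q : ℝ) - 1) ^ r / (r + 1).factorial)))
  rw [mul_one, mul_zero, add_zero] at hlim
  refine hlim.congr' ?_
  filter_upwards [hm.eventually_ne_atTop 0, hk.eventually_ne_atTop 0] with i hmi hki
  exact (prefixCost_eq hq r x hmi hki).symm

lemma muD_add_le (hq : 2 ≤ q) {m k r : ℕ} (hr : r ≤ m) (hk : 1 ≤ k) {x : ℝ} (hx : 0 ≤ x) :
    muD q (m + k) (r + 1) ≤ prefixCost q r x m k * muD q k 1 +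
      Real.exp (-x) * ((m + k : ℕ) / (k + r : ℕ) : ℝ) ^ (r + 1) * muD q (k + r) (r + 1) := by
  have hq₁ : (q : ℝ) - 1 ≠ 0 := sub_ne_zero.2 (mod_cast (by omega))
  have hscale_one : densityScale q k 1 ≠ 0 := by
    simp only [densityScale]
    positivity
  have hscale_succ : (q : ℝ) ^ (m - r) * densityScale q (m + k) (r + 1) =
      ((m + k : ℕ) / (k + r : ℕ) : ℝ) ^ (r + 1) * densityScale q (k + r) (r + 1) := by
    have : (q : ℝ) ^ (m + k) = q ^ (m - r) * q ^ (k + r) := by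
      rw [← pow_add]
      congr 1
      omega
    simp only [densityScale, this, div_pow]
    field_simp
  simp only [muD_eq_KD_mul_densityScale]
  calc KD q (m + k) (r + 1) * densityScale q (m + k) (r + 1)
      ≤ ((x / supersequenceDensity q m r + 1) * KD q k 1 +
          Real.exp (-x) * (q : ℝ) ^ (m - r) * KD q (k + r) (r + 1)) *
            densityScale q (m + k) (r + 1) :=
        mul_le_mul_of_nonneg_right (KD_add_le_exp hq hr hk hx) (densityScale_nonneg (by omega) _ _)
    _ = prefixCost q r x m k * (KD q k 1 * densityScale q k 1) +
          Real.exp (-x) * KD q (k + r) (r + 1) *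
            ((q : ℝ) ^ (m - r) * densityScale q (m + k) (r + 1)) := by
        simp only [prefixCost]
        field_simp
    _ = _ := by
        rw [hscale_succ]
        ring

lemma muD_succ_le (hq : 2 ≤ q) {r n : ℕ} (hr : 1 ≤ r) (hn : 2 * r ≤ n) {x : ℝ} (hx : 0 ≤ x) :
    muD q n (r + 1) ≤
      prefixCost q r x (n - n / (r + 1)) (n / (r + 1)) * muD q (n / (r + 1)) 1 +
        Real.exp (-x) * (r + 1 : ℕ) ^ (r + 1) * muD q (n / (r + 1) + r) (r + 1) := by
  have hhalf : n / (r + 1) ≤ n / 2 := Nat.div_le_div_left (by omega) two_pos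
  have hpos : 1 ≤ n / (r + 1) := (Nat.one_le_div_iff (by omega)).2 (by omega)
  have hlt : n < (r + 1) * (n / (r + 1) + 1) := Nat.lt_mul_div_succ n (by omega)
  have hratio : (n : ℝ) / (n / (r + 1) + r : ℕ) ≤ (r + 1 : ℕ) := by
    refine div_le_of_le_mul₀ (by positivity) (by positivity) ?_
    exact_mod_cast hlt.le.trans (by gcongr)
  have hrec := muD_add_le hq (show r ≤ n - n / (r + 1) by omega) hpos hx
  rw [Nat.sub_add_cancel (Nat.div_le_self _ _)] at hrec
  refine hrec.trans ?_
  gcongr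
  exact muD_nonneg (by omega) _ _

lemma tendsto_natCast_div_div_atTop (R : ℕ) :
    Tendsto (fun n : ℕ ↦ ((n / R : ℕ) : ℝ) / n) atTop (𝓝 (R : ℝ)⁻¹) := by
  refine ((tendsto_nat_floor_mul_div_atTop (a := (R : ℝ)⁻¹) (by positivity)).comp
    tendsto_natCast_atTop_atTop).congr fun n ↦ ?_
  rw [Function.comp_apply, inv_mul_eq_div, Nat.floor_div_eq_div]

lemma tendsto_prefixCost_div (hq : 2 ≤ q) {r : ℕ} (hr : 1 ≤ r) (x : ℝ) :
    Tendsto (fun n ↦ prefixCost q r x (n - n / (r + 1)) (n / (r + 1))) atTop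
      (𝓝 (x * (1 + (r : ℝ)⁻¹) ^ r)) := by
  have hk : Tendsto (fun n ↦ n / (r + 1)) atTop atTop := Nat.tendsto_div_const_atTop (by omega)
  have hm : Tendsto (fun n ↦ n - n / (r + 1)) atTop atTop := by
    refine tendsto_atTop_mono (fun n ↦ ?_) hk
    have : n / (r + 1) ≤ n / 2 := Nat.div_le_div_left (by omega) two_pos
    omega
  have hkn := tendsto_natCast_div_div_atTop (r + 1)
  have hv := hkn.inv₀ (by positivity)
  have hsub : 1 - ((r + 1 : ℕ) : ℝ)⁻¹ = (1 + (r : ℝ)⁻¹)⁻¹ := by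
    push_cast
    field_simp
    ring
  have hu := (hkn.const_sub 1).inv₀ (by rw [hsub]; positivity)
  rw [hsub, inv_inv] at hu
  rw [inv_inv] at hv
  have hlim : x * (1 + (r : ℝ)⁻¹) ^ r = (r + 1 : ℕ) * (1 + (r : ℝ)⁻¹) ^ r * (x / (r + 1)) := by
    push_cast
    field_simp
  rw [hlim]
  refine tendsto_prefixCost hq r x hm hk (hu.congr' ?_) (hv.congr' ?_)
  all_goals
    filter_upwards [eventually_gt_atTop 0] with n hn
    rw [Nat.sub_add_cancel (Nat.div_le_self _ _)]
  · rw [Nat.cast_sub (Nat.div_le_self _ _)]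
    field_simp
  · rw [inv_div]

lemma limsup_muD_succ_le (hq : 2 ≤ q) {r : ℕ} (hr : 1 ≤ r) {x : ℝ} (hx : 0 ≤ x)
    (hexp : Real.exp (-x) * (r + 1 : ℕ) ^ (r + 1) < 1) :
    limsup (fun n ↦ muD q n (r + 1)) atTop ≤
      x * (1 + (r : ℝ)⁻¹) ^ r * limsup (fun n ↦ muD q n 1) atTop /
        (1 - Real.exp (-x) * (r + 1 : ℕ) ^ (r + 1)) := by
  have hk : Tendsto (fun n ↦ n / (r + 1)) atTop atTop := Nat.tendsto_div_const_atTop (by omega)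
  have hflt : ∀ᶠ n in atTop, n / (r + 1) + r < n := by
    filter_upwards [eventually_gt_atTop (2 * r)] with n hn
    have : n / (r + 1) ≤ n / 2 := Nat.div_le_div_left (by omega) two_pos
    omega
  have hrec := (eventually_ge_atTop (2 * r)).mono fun n hn ↦ muD_succ_le hq hr hn hx
  have hcost := tendsto_prefixCost_div hq hr x
  have hcost₀ : ∃ᶠ n in atTop, 0 ≤ prefixCost q r x (n - n / (r + 1)) (n / (r + 1)) :=
    .of_forall fun _ ↦ prefixCost_nonneg (by omega) r hx _ _
  have hmu₀ : 0 ≤ᶠ[atTop] fun n ↦ muD q (n / (r + 1)) 1 :=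
    .of_forall fun _ ↦ muD_nonneg (by omega) _ _
  have hmu : IsBoundedUnder (· ≤ ·) atTop fun n ↦ muD q (n / (r + 1)) 1 :=
    isBoundedUnder_of_eventually_le ((hk.eventually_ge_atTop 1).mono fun _ ↦ muD_one_le hq)
  have hprod : limsup ((fun n ↦ prefixCost q r x (n - n / (r + 1)) (n / (r + 1))) *
      fun n ↦ muD q (n / (r + 1)) 1) atTop ≤
        x * (1 + (r : ℝ)⁻¹) ^ r * limsup (fun n ↦ muD q n 1) atTop := by
    refine (limsup_mul_le hcost₀ hcost.isBoundedUnder_le hmu₀ hmu).trans ?_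
    rw [hcost.limsup_eq]
    gcongr
    have hmap : (map (fun n ↦ n / (r + 1)) atTop).IsBoundedUnder (· ≥ ·) fun n ↦ muD q n 1 :=
      isBoundedUnder_of ⟨0, fun n ↦ muD_nonneg (by omega) n 1⟩
    exact hk.limsup_comp_le_limsup hmap.isCoboundedUnder_le (isBoundedUnder_le_muD_one hq)
  refine (limsup_le_limsup_div_one_sub (by positivity) hexp
    (tendsto_atTop_mono (fun _ ↦ Nat.le_add_right _ r) hk) hflt
    (isBoundedUnder_of ⟨0, fun n ↦ muD_nonneg (by omega) n _⟩)
    (isBoundedUnder_le_mul_of_nonneg hcost₀ hcost.isBoundedUnder_le hmu₀ hmu)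
    hrec).trans ?_
  exact div_le_div_of_nonneg_right hprod (sub_nonneg.2 hexp.le)

lemma limsup_muD_one_nonneg (hq : 2 ≤ q) : 0 ≤ limsup (fun n ↦ muD q n 1) atTop :=
  le_limsup_of_frequently_le (.of_forall fun n ↦ muD_nonneg (by omega) n 1)
    (isBoundedUnder_le_muD_one hq)

lemma limsup_muD_le_exp_one_mul (hq : 2 ≤ q) {R : ℕ} (hR : 2 ≤ R) {t : ℝ} (ht : 0 < t) :
    limsup (fun n ↦ muD q n R) atTop ≤
      Real.exp 1 * ((R * Real.log R + t) / (1 - Real.exp (-t))) *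
        limsup (fun n ↦ muD q n 1) atTop := by
  obtain ⟨r, rfl⟩ : ∃ r, R = r + 1 := ⟨R - 1, by omega⟩
  have hmu := limsup_muD_one_nonneg hq
  have hlt : Real.exp (-t) < 1 := Real.exp_lt_one_iff.2 (neg_neg_of_pos ht)
  set x := (r + 1 : ℕ) * Real.log (r + 1 : ℕ) + t with hx
  have hexp : Real.exp (-x) * (r + 1 : ℕ) ^ (r + 1) = Real.exp (-t) := by
    rw [hx, neg_add, Real.exp_add, Real.exp_neg, Real.exp_nat_mul, Real.exp_log (by positivity)]
    field_simp
  calc limsup (fun n ↦ muD q n (r + 1)) atTop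
      ≤ x * (1 + (r : ℝ)⁻¹) ^ r * limsup (fun n ↦ muD q n 1) atTop / (1 - Real.exp (-t)) :=
        hexp ▸ limsup_muD_succ_le hq (by omega) (by positivity) (hexp.trans_lt hlt)
    _ = (1 + (r : ℝ)⁻¹) ^ r * (x / (1 - Real.exp (-t))) * limsup (fun n ↦ muD q n 1) atTop := by
        ring
    _ ≤ _ := by
        gcongr
        exact Real.one_add_inv_pow_le_exp

end Density

lemma quadratic_div_one_sub_exp_neg_le {t : ℝ} (ht : 0 < t) :
    (t ^ 2 / 2 + t) / (1 - Real.exp (-t)) ≤ t ^ 2 / 2 + t + 1 := by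
  have hlt : Real.exp (-t) < 1 := Real.exp_lt_one_iff.2 (neg_neg_of_pos ht)
  have hquad : Real.exp (-t) * (1 + t + t ^ 2 / 2) ≤ 1 := by
    rw [Real.exp_neg, inv_mul_le_one₀ (Real.exp_pos t)]
    exact Real.quadratic_le_exp_of_nonneg ht.le
  rw [div_le_iff₀ (sub_pos.2 hlt)]
  linarith

/-- For fixed `q ≥ 2` and `R ≥ 2`,
`limsup_n μ_D^q(n,R) ≤ e(R ln R + √(2R ln R) + 1)·limsup_n μ_D^q(n,1)`. -/
theorem multiple_deletion_covering_density (q R : ℕ) (hq : 2 ≤ q) (hR : 2 ≤ R) :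
    Filter.limsup (fun n : ℕ => muD q n R) Filter.atTop ≤
      Real.exp 1 * ((R : ℝ) * Real.log R + Real.sqrt (2 * R * Real.log R) + 1) *
        Filter.limsup (fun n : ℕ => muD q n 1) Filter.atTop := by
  have hlog : 0 < (R : ℝ) * Real.log R := mul_pos (by positivity) (Real.log_pos (mod_cast hR))
  set t : ℝ := √(2 * R * Real.log R) with ht_def
  have ht : 0 < t := Real.sqrt_pos.2 (by linarith)
  have hR_log : R * Real.log R = t ^ 2 / 2 := by
    rw [ht_def, Real.sq_sqrt (by linarith)]
    ring
  refine (limsup_muD_le_exp_one_mul hq hR ht).trans ?_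
  gcongr
  · exact limsup_muD_one_nonneg hq
  · rw [hR_log]
    exact quadratic_div_one_sub_exp_neg_le ht
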